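/- The quotient group Λ4♯/Λ4 has exactly 64 elements, consisting of: the zero coset; exactly 24 cosets of minimal norm 1/2, each of order 4; exactly 12 cosets of minimal norm 1, each of order 2; exactly 24 cosets of minimal norm 3/2, each of order 4; and exactly 3 cosets of minimal norm 2, each of order 2. Here the minimal norm of a coset is the minimum of ‖x‖² over x in the coset. -/

import Mathlib

noncomputable section

open scoped RealInnerProductSpace

/-- `ℝ^n` with the standard inner product. -/
abbrev E (n : ℕ) := EuclideanSpace ℝ (Fin n)

/-- The standard basis vector `ε i`. -/
def εv {n : ℕ} (i : Fin n) : E n := EuclideanSpace.single i 1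

/-- The vector of `ℝ^n` with the given coordinates. -/
def vec {n : ℕ} (x : Fin n → ℝ) : E n := (WithLp.equiv 2 (Fin n → ℝ)).symm x

/-- The vector of `ℝ^n` with the given integer coordinates. -/
def intVec {n : ℕ} (x : Fin n → ℤ) : E n := (WithLp.equiv 2 (Fin n → ℝ)).symm fun i => (x i : ℝ)

/-- A lattice is integral if all pairwise inner products of its elements are integers. -/
def LatticeIsIntegral {n : ℕ} (L : Submodule ℤ (E n)) : Prop :=
  ∀ x ∈ L, ∀ y ∈ L, ∃ k : ℤ, ⟪x, y⟫ = (k : ℝ)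

/-- Two lattices are isometric if a linear isometry of the ambient space carries
one onto the other. -/
def IsometricLattices {n : ℕ} (L M : Submodule ℤ (E n)) : Prop :=
  ∃ g : E n ≃ₗᵢ[ℝ] E n, g '' (L : Set (E n)) = (M : Set (E n))

/-- The laminated lattice `Λ₄`, the ℤ-span of `2ε1, 2ε2, 2ε3, ε1+ε2+ε3+ε4`, i.e.
`{x ∈ ℤ⁴ : x 0 ≡ x 1 ≡ x 2 ≡ x 3 (mod 2)} ≅ √2·D₄`. -/
def Λ4 : Submodule ℤ (E 4) :=
  Submodule.span ℤ {(2 : ℝ) • εv 0, (2 : ℝ) • εv 1, (2 : ℝ) • εv 2, εv 0 + εv 1 + εv 2 + εv 3}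

/-- The dual lattice `Λ♯ = {x : ⟪x,y⟫ ∈ ℤ for all y ∈ Λ}`. -/
def dualLattice {n : ℕ} (Λ : Submodule ℤ (E n)) : Submodule ℤ (E n) where
  carrier := {x | ∀ y ∈ Λ, ∃ k : ℤ, ⟪x, y⟫ = (k : ℝ)}
  zero_mem' := fun y _ => ⟨0, by simp⟩
  add_mem' := by
    intro a b ha hb y hy
    obtain ⟨k, hk⟩ := ha y hy
    obtain ⟨l, hl⟩ := hb y hy
    exact ⟨k + l, by rw [inner_add_left, hk, hl]; push_cast; ring⟩
  smul_mem' := by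
    intro c x hx y hy
    obtain ⟨k, hk⟩ := hx y hy
    refine ⟨c * k, ?_⟩
    rw [← Int.cast_smul_eq_zsmul ℝ c x, real_inner_smul_left, hk]
    push_cast
    ring

/-- The quotient abelian group `Λ♯/Λ`. -/
abbrev DualQuot {n : ℕ} (Λ : Submodule ℤ (E n)) :=
  (dualLattice Λ) ⧸ (Λ.comap (dualLattice Λ).subtype)

/-- The coset `c ∈ Λ♯/Λ` has minimal norm `m`, i.e. `m` is the minimum of `‖x‖²`
over `x` in the coset `c`. -/
def CosetMinNorm {n : ℕ} (Λ : Submodule ℤ (E n)) (c : DualQuot Λ) (m : ℝ) : Prop :=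
  IsLeast {r : ℝ | ∃ x : dualLattice Λ, Submodule.Quotient.mk x = c ∧ r = ‖(x : E n)‖ ^ 2} m

/-!
`Λ4` arises by Construction A from the code `C = {0000, 2222}` over `ZMod 4`: it consists of the
vectors `a / 2` with `a ∈ ℤ^4` and `a mod 4 ∈ C`. Construction A turns dual codes into dual
lattices, so `Λ4♯/Λ4 ≅ C^⊥/C`, and since a letter of `ZMod 4` has a shortest integer lift, the
minimal norm of a coset is a quarter of the minimal Euclidean weight of the corresponding two words
`u`, `u + 2222`. The classes are then counted among the `128` words of even sum in `C^⊥`, two words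
for each coset.
-/

theorem natAbs_valMinAbs_intCast_le {m : ℕ} [NeZero m] (k : ℤ) :
    (k : ZMod m).valMinAbs.natAbs ≤ k.natAbs :=
  ZMod.natAbs_min_of_le_div_two m _ _ (ZMod.coe_valMinAbs _) (ZMod.natAbs_valMinAbs_le _)

theorem isLeast_iff_of_isCoinitialFor {α : Type*} [PartialOrder α] {s t : Set α} {a : α}
    (hts : t ⊆ s) (hst : IsCoinitialFor s t) : IsLeast s a ↔ IsLeast t a := by
  constructor
  · rintro ⟨has, hmin⟩
    obtain ⟨b, hb, hba⟩ := hst has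
    exact ⟨hba.antisymm (hmin (hts hb)) ▸ hb, fun _ hc => hmin (hts hc)⟩
  · rintro ⟨hat, hmin⟩
    refine ⟨hts hat, fun b hb => ?_⟩
    obtain ⟨c, hc, hcb⟩ := hst hb
    exact (hmin hc).trans hcb

theorem ncard_preimage_of_surjective {A B : Type*} [AddGroup A] [AddGroup B] {f : A →+ B}
    (hf : Function.Surjective f) (s : Set B) : (f ⁻¹' s).ncard = Nat.card f.ker * s.ncard := by
  let e := QuotientAddGroup.quotientKerEquivOfSurjective f hf
  have hs : s.ncard = (e ⁻¹' s).ncard :=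
    (Set.ncard_preimage_of_injective_subset_range e.injective (by simp)).symm
  rw [hs, ← Nat.card_coe_set_eq, ← Nat.card_coe_set_eq, ← Nat.card_prod]
  exact Nat.card_congr (QuotientAddGroup.preimageMkEquivAddSubgroupProdSet f.ker (e ⁻¹' s))

section Codes

variable {n m : ℕ}

/-- Componentwise reduction of integer vectors modulo `m`. -/
def residue (m : ℕ) : (Fin n → ℤ) →ₗ[ℤ] (Fin n → ZMod m) :=
  (Int.castAddHom (ZMod m)).toIntLinearMap.compLeft (Fin n)

@[simp]
theorem residue_apply (a : Fin n → ℤ) (i : Fin n) : residue m a i = a i := rfl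

theorem intCast_dotProduct (a b : Fin n → ℤ) :
    ((a ⬝ᵥ b : ℤ) : ZMod m) = residue m a ⬝ᵥ residue m b :=
  RingHom.map_dotProduct (Int.castRingHom (ZMod m)) a b

/-- The lift of a word over `ZMod m` to the shortest integer vector with that residue. -/
def absMinLift (u : Fin n → ZMod m) : Fin n → ℤ := fun i => (u i).valMinAbs

@[simp]
theorem residue_absMinLift (u : Fin n → ZMod m) : residue m (absMinLift u) = u :=
  funext fun i => (u i).coe_valMinAbs

/-- The Euclidean weight of a word over `ZMod m`: the sum of the squared distances of its
letters from `0` on the `m`-cycle. -/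
def euclideanWeight (u : Fin n → ZMod m) : ℕ := ∑ i, (u i).valMinAbs.natAbs ^ 2

theorem natCast_euclideanWeight (u : Fin n → ZMod m) :
    (euclideanWeight u : ℤ) = absMinLift u ⬝ᵥ absMinLift u := by
  simp [euclideanWeight, absMinLift, dotProduct, sq]

theorem euclideanWeight_residue_le [NeZero m] (a : Fin n → ℤ) :
    (euclideanWeight (residue m a) : ℤ) ≤ a ⬝ᵥ a := by
  rw [natCast_euclideanWeight]
  exact Finset.sum_le_sum fun i _ =>
    Int.natAbs_le_iff_mul_self_le.1 (natAbs_valMinAbs_intCast_le (a i))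

/-- The dual `C^⊥` of a linear code `C` over `ZMod m`. -/
def dualCode (C : Submodule (ZMod m) (Fin n → ZMod m)) : Submodule (ZMod m) (Fin n → ZMod m) :=
  C.orthogonalBilin (dotProductBilin (ZMod m) (ZMod m))

theorem mem_dualCode {C : Submodule (ZMod m) (Fin n → ZMod m)} {u : Fin n → ZMod m} :
    u ∈ dualCode C ↔ ∀ c ∈ C, c ⬝ᵥ u = 0 := Iff.rfl

theorem mem_dualCode_span_singleton {c u : Fin n → ZMod m} :
    u ∈ dualCode (Submodule.span (ZMod m) {c}) ↔ c ⬝ᵥ u = 0 := by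
  refine mem_dualCode.trans ⟨fun h => h c (Submodule.mem_span_singleton_self c), fun h v hv => ?_⟩
  obtain ⟨r, rfl⟩ := Submodule.mem_span_singleton.1 hv
  rw [smul_dotProduct, h, smul_zero]

/-- The embedding `a ↦ a / √m` of `ℤ^n` into `ℝ^n`. -/
def scaledIntVec (m : ℕ) : (Fin n → ℤ) →ₗ[ℤ] E n where
  toFun a := (√(m : ℝ))⁻¹ • intVec a
  map_add' a b := by
    ext i
    simp [intVec, mul_add]
  map_smul' k a := by
    ext i
    simp [intVec, mul_left_comm]

theorem scaledIntVec_apply (a : Fin n → ℤ) (i : Fin n) :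
    scaledIntVec m a i = (√(m : ℝ))⁻¹ * a i := rfl

theorem inner_scaledIntVec (a b : Fin n → ℤ) :
    ⟪scaledIntVec m a, scaledIntVec m b⟫ = ((a ⬝ᵥ b : ℤ) : ℝ) / m := by
  have h (i : Fin n) : (√(m : ℝ))⁻¹ * b i * ((√(m : ℝ))⁻¹ * a i) = (a i * b i) / m := by
    rw [mul_mul_mul_comm, ← mul_inv, Real.mul_self_sqrt m.cast_nonneg]
    ring
  simp [PiLp.inner_apply, scaledIntVec_apply, dotProduct, h, Finset.sum_div]

theorem norm_sq_scaledIntVec (a : Fin n → ℤ) :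
    ‖scaledIntVec m a‖ ^ 2 = ((a ⬝ᵥ a : ℤ) : ℝ) / m := by
  rw [← real_inner_self_eq_norm_sq, inner_scaledIntVec]

theorem scaledIntVec_injective [NeZero m] :
    Function.Injective (scaledIntVec m : (Fin n → ℤ) → E n) := by
  intro a b h
  ext i
  have hm : √(m : ℝ) ≠ 0 := by simp [NeZero.ne m]
  simpa [scaledIntVec_apply, hm] using congrArg (fun x : E n => x i) h

/-- Construction A: the lattice `{a / √m : a ∈ ℤ^n, a mod m ∈ C}` of a linear code `C` over
`ZMod m`. The scaling makes duality of lattices correspond to duality of codes. -/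
def constructionA (C : Submodule (ZMod m) (Fin n → ZMod m)) : Submodule ℤ (E n) :=
  ((C.restrictScalars ℤ).comap (residue m)).map (scaledIntVec m)

variable {C : Submodule (ZMod m) (Fin n → ZMod m)}

theorem mem_constructionA {x : E n} :
    x ∈ constructionA C ↔ ∃ a, residue m a ∈ C ∧ scaledIntVec m a = x := Iff.rfl

variable [NeZero m]

theorem scaledIntVec_mem_constructionA {a : Fin n → ℤ} :
    scaledIntVec m a ∈ constructionA C ↔ residue m a ∈ C := by
  rw [mem_constructionA]
  exact ⟨fun ⟨b, hb, hab⟩ => scaledIntVec_injective hab ▸ hb, fun h => ⟨a, h, rfl⟩⟩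

theorem exists_scaledIntVec_eq_of_mem_dualLattice {x : E n}
    (hx : x ∈ dualLattice (constructionA C)) : ∃ a, scaledIntVec m a = x := by
  have hm : √(m : ℝ) ≠ 0 := by simp [NeZero.ne m]
  have hcoord (i : Fin n) : ∃ k : ℤ, √(m : ℝ) * x i = k := by
    have hmem : scaledIntVec m (Pi.single i (m : ℤ)) ∈ constructionA C := by
      rw [scaledIntVec_mem_constructionA]
      convert C.zero_mem
      ext j
      rcases eq_or_ne j i with rfl | hji <;> simp [*]
    obtain ⟨k, hk⟩ := hx _ hmem
    refine ⟨k, hk ▸ ?_⟩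
    have hsq : (√(m : ℝ))⁻¹ * m = √m := by
      rw [inv_mul_eq_div, Real.div_sqrt]
    simp [PiLp.inner_apply, scaledIntVec_apply, Pi.single_apply, hsq]
  choose a ha using hcoord
  refine ⟨a, ?_⟩
  ext i
  rw [scaledIntVec_apply, ← ha, inv_mul_cancel_left₀ hm]

theorem scaledIntVec_mem_dualLattice_constructionA {a : Fin n → ℤ} :
    scaledIntVec m a ∈ dualLattice (constructionA C) ↔ residue m a ∈ dualCode C := by
  have hm : (m : ℝ) ≠ 0 := NeZero.ne _
  have hinner (b : Fin n → ℤ) : (∃ k : ℤ, ⟪scaledIntVec m a, scaledIntVec m b⟫ = k) ↔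
      residue m b ⬝ᵥ residue m a = 0 := by
    rw [← intCast_dotProduct, ZMod.intCast_zmod_eq_zero_iff_dvd, dotProduct_comm b a]
    refine exists_congr fun k => ?_
    rw [inner_scaledIntVec, div_eq_iff hm, mul_comm]
    norm_cast
  rw [mem_dualCode]
  constructor
  · intro h c hc
    rw [← residue_absMinLift c] at hc ⊢
    exact (hinner _).1 (h _ (scaledIntVec_mem_constructionA.2 hc))
  · rintro h _ ⟨b, hb, rfl⟩
    exact (hinner b).2 (h _ hb)

theorem dualLattice_constructionA :
    dualLattice (constructionA C) = constructionA (dualCode C) := by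
  ext x
  constructor
  · intro hx
    obtain ⟨a, rfl⟩ := exists_scaledIntVec_eq_of_mem_dualLattice hx
    exact ⟨a, scaledIntVec_mem_dualLattice_constructionA.1 hx, rfl⟩
  · rintro ⟨a, ha, rfl⟩
    exact scaledIntVec_mem_dualLattice_constructionA.2 ha

/-- The vector `a / √m` as an element of the dual lattice of `constructionA C`. -/
def dualVec (a : Fin n → ℤ) (ha : residue m a ∈ dualCode C) :
    dualLattice (constructionA C) :=
  ⟨scaledIntVec m a, scaledIntVec_mem_dualLattice_constructionA.2 ha⟩

theorem mk_dualVec_eq_iff {a b : Fin n → ℤ} {ha : residue m a ∈ dualCode C}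
    {hb : residue m b ∈ dualCode C} :
    (Submodule.Quotient.mk (dualVec a ha) : DualQuot (constructionA C)) =
      Submodule.Quotient.mk (dualVec b hb) ↔ residue m a - residue m b ∈ C := by
  rw [Submodule.Quotient.eq, ← map_sub, ← scaledIntVec_mem_constructionA, map_sub]
  rfl

variable (C) in
/-- The homomorphism from `C^⊥` to `Λ♯/Λ`, where `Λ = constructionA C`, which sends a word to the
coset of its lifts. It induces an isomorphism from `C^⊥/(C ∩ C^⊥)`. -/
def wordCoset : dualCode C →+ DualQuot (constructionA C) :=
  AddMonoidHom.mk'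
    (fun u => Submodule.Quotient.mk (dualVec (absMinLift u.1) (by simp)))
    fun u v => by
      have huv : residue m (absMinLift u.1 + absMinLift v.1) ∈ dualCode C := by
        simpa using (u + v).2
      calc
        _ = Submodule.Quotient.mk (dualVec _ huv) := mk_dualVec_eq_iff.2 (by simp)
        _ = _ := congrArg Submodule.Quotient.mk (Subtype.ext (map_add _ _ _))

theorem wordCoset_apply (u : dualCode C) :
    wordCoset C u = Submodule.Quotient.mk (dualVec (absMinLift u.1) (by simp)) := rfl

theorem mk_dualVec_eq_wordCoset_iff {a : Fin n → ℤ} {ha : residue m a ∈ dualCode C}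
    {u : dualCode C} :
    Submodule.Quotient.mk (dualVec a ha) = wordCoset C u ↔ residue m a - u ∈ C := by
  rw [wordCoset_apply, mk_dualVec_eq_iff, residue_absMinLift]

theorem exists_dualVec_eq (x : dualLattice (constructionA C)) :
    ∃ (a : Fin n → ℤ) (ha : residue m a ∈ dualCode C), dualVec a ha = x := by
  obtain ⟨a, ha, hax⟩ := dualLattice_constructionA.le x.2
  exact ⟨a, ha, Subtype.ext hax⟩

theorem wordCoset_surjective : Function.Surjective (wordCoset C) := by
  intro q
  obtain ⟨x, rfl⟩ := Submodule.Quotient.mk_surjective _ q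
  obtain ⟨a, ha, rfl⟩ := exists_dualVec_eq x
  exact ⟨⟨residue m a, ha⟩, (mk_dualVec_eq_wordCoset_iff.2 (by simp)).symm⟩

theorem wordCoset_eq_zero_iff {u : dualCode C} :
    wordCoset C u = 0 ↔ (u : Fin n → ZMod m) ∈ C := by
  have h0 : residue m (0 : Fin n → ℤ) ∈ dualCode C := by simp
  have hzero : (Submodule.Quotient.mk (dualVec 0 h0) : DualQuot (constructionA C)) = 0 := by
    rw [Submodule.Quotient.mk_eq_zero]
    simp [dualVec]
  rw [eq_comm, ← hzero, mk_dualVec_eq_wordCoset_iff]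
  simp

theorem cosetMinNorm_wordCoset_iff {u : dualCode C} {k : ℕ} :
    CosetMinNorm (constructionA C) (wordCoset C u) (k / m) ↔
      IsLeast {w | ∃ v ∈ dualCode C, v - u ∈ C ∧ euclideanWeight v = w} k := by
  have hm : (0 : ℝ) < m := Nat.cast_pos.2 (NeZero.pos m)
  have hmono : StrictMono fun w : ℕ => (w : ℝ) / m := fun _ _ h =>
    div_lt_div_of_pos_right (Nat.cast_lt.2 h) hm
  rw [← hmono.map_isLeast]
  refine isLeast_iff_of_isCoinitialFor ?_ ?_
  · rintro _ ⟨_, ⟨v, hv, hvu, rfl⟩, rfl⟩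
    refine ⟨dualVec (absMinLift v) (by simpa), mk_dualVec_eq_wordCoset_iff.2 (by simpa), ?_⟩
    rw [dualVec, norm_sq_scaledIntVec, ← natCast_euclideanWeight, Int.cast_natCast]
  · rintro _ ⟨x, hx, rfl⟩
    obtain ⟨a, ha, rfl⟩ := exists_dualVec_eq x
    refine ⟨_, ⟨_, ⟨residue m a, ha, mk_dualVec_eq_wordCoset_iff.1 hx, rfl⟩, rfl⟩, ?_⟩
    rw [dualVec, norm_sq_scaledIntVec]
    have hle : (euclideanWeight (residue m a) : ℝ) ≤ (a ⬝ᵥ a : ℤ) := by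
      exact_mod_cast euclideanWeight_residue_le a
    exact div_le_div_of_nonneg_right hle hm.le

theorem ncard_preimage_wordCoset (hC : C ≤ dualCode C)
    (s : Set (DualQuot (constructionA C))) :
    (wordCoset C ⁻¹' s).ncard = Nat.card C * s.ncard := by
  have hker : (wordCoset C).ker = C.toAddSubgroup.addSubgroupOf (dualCode C).toAddSubgroup :=
    AddSubgroup.ext fun _ => wordCoset_eq_zero_iff
  rw [ncard_preimage_of_surjective wordCoset_surjective, hker]
  congr 1
  have hC' : C.toAddSubgroup ≤ (dualCode C).toAddSubgroup := hC
  exact Nat.card_congr (AddSubgroup.addSubgroupOfEquivOfLe hC').toEquiv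

end Codes

/-- The self-orthogonal code `{0000, 2222}` over `ZMod 4` which gives `Λ4` by Construction A. -/
def doubledRepetitionCode : Submodule (ZMod 4) (Fin 4 → ZMod 4) := Submodule.span (ZMod 4) {2}

theorem mem_doubledRepetitionCode {u : Fin 4 → ZMod 4} :
    u ∈ doubledRepetitionCode ↔ u = 0 ∨ u = 2 := by
  rw [doubledRepetitionCode, Submodule.mem_span_singleton]
  revert u
  decide +kernel

theorem mem_dualCode_doubledRepetitionCode {u : Fin 4 → ZMod 4} :
    u ∈ dualCode doubledRepetitionCode ↔ 2 ⬝ᵥ u = 0 :=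
  mem_dualCode_span_singleton

theorem doubledRepetitionCode_le_dualCode :
    doubledRepetitionCode ≤ dualCode doubledRepetitionCode := by
  intro u hu
  rw [mem_dualCode_doubledRepetitionCode]
  rcases mem_doubledRepetitionCode.1 hu with rfl | rfl <;> decide

theorem card_doubledRepetitionCode : Nat.card doubledRepetitionCode = 2 := by
  have h : (doubledRepetitionCode : Set (Fin 4 → ZMod 4)) = {0, 2} :=
    Set.ext fun _ => mem_doubledRepetitionCode
  rw [← SetLike.coe_sort_coe, h, Nat.card_coe_set_eq, Set.ncard_pair (by decide)]

theorem scaledIntVec_four_apply {n : ℕ} (a : Fin n → ℤ) (i : Fin n) :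
    scaledIntVec 4 a i = a i / 2 := by
  have hsqrt : √((4 : ℕ) : ℝ) = 2 := by
    rw [Real.sqrt_eq_iff_mul_self_eq] <;> norm_num
  rw [scaledIntVec_apply, hsqrt, inv_mul_eq_div]

theorem Λ4_eq_constructionA : Λ4 = constructionA doubledRepetitionCode := by
  apply le_antisymm
  · have hsingle (j : Fin 4) : (2 : ℝ) • εv j ∈ constructionA doubledRepetitionCode := by
      refine ⟨Pi.single j 4, mem_doubledRepetitionCode.2 (.inl (by revert j; decide)), ?_⟩
      ext i
      rcases eq_or_ne i j with rfl | hij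
      · norm_num [scaledIntVec_four_apply, εv]
      · simp [scaledIntVec_four_apply, εv, hij]
    have hsum : εv 0 + εv 1 + εv 2 + εv 3 ∈ constructionA doubledRepetitionCode := by
      refine ⟨2, mem_doubledRepetitionCode.2 (.inr (by decide)), ?_⟩
      ext i
      fin_cases i <;> simp [scaledIntVec_four_apply, εv]
    refine Submodule.span_le.2 ?_
    rintro x (rfl | rfl | rfl | rfl)
    exacts [hsingle 0, hsingle 1, hsingle 2, hsum]
  · rintro _ ⟨a, ha, rfl⟩
    obtain ⟨c, hc⟩ := Submodule.mem_span_singleton.1 ha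
    have hcoord (i : Fin 4) : ∃ k : ℤ, a i = 2 * c.valMinAbs + 4 * k := by
      have hi : ((2 * c.valMinAbs : ℤ) : ZMod 4) = a i := by
        simpa [mul_comm] using congrFun hc i
      obtain ⟨k, hk⟩ := (ZMod.intCast_eq_intCast_iff_dvd_sub _ _ 4).1 hi
      exact ⟨k, by push_cast at hk; linarith⟩
    choose k hk using hcoord
    simp only [Λ4, Submodule.mem_span_insert, Submodule.mem_span_singleton]
    refine ⟨k 0 - k 3, _, ⟨k 1 - k 3, _, ⟨k 2 - k 3, _,
      ⟨c.valMinAbs + 2 * k 3, rfl⟩, rfl⟩, rfl⟩, ?_⟩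
    ext i
    fin_cases i <;> simp [scaledIntVec_four_apply, εv, hk] <;> ring

/-- The minimal Euclidean weight in the coset `u + {0000, 2222}`. -/
def minWeight (u : Fin 4 → ZMod 4) : ℕ := min (euclideanWeight u) (euclideanWeight (u + 2))

/-- The order of a word modulo `{0000, 2222}`, in a form that can be evaluated. -/
def wordOrder (u : Fin 4 → ZMod 4) : ℕ :=
  if u = 0 ∨ u = 2 then 1 else if 2 • u = 0 ∨ 2 • u = 2 then 2 else 4

theorem mem_dualCode_and_sub_mem_iff {u v : Fin 4 → ZMod 4}
    (hu : u ∈ dualCode doubledRepetitionCode) :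
    v ∈ dualCode doubledRepetitionCode ∧ v - u ∈ doubledRepetitionCode ↔ v = u ∨ v = u + 2 := by
  rw [mem_doubledRepetitionCode, sub_eq_zero, sub_eq_iff_eq_add']
  refine and_iff_right_of_imp ?_
  have h2 := doubledRepetitionCode_le_dualCode (mem_doubledRepetitionCode.2 (.inr rfl))
  rintro (rfl | rfl)
  exacts [hu, add_mem hu h2]

theorem cosetMinNorm_wordCoset_iff_minWeight {u : dualCode doubledRepetitionCode} {k : ℕ} {r : ℝ}
    (hr : r = k / 4) :
    CosetMinNorm (constructionA doubledRepetitionCode) (wordCoset _ u) r ↔ minWeight u = k := by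
  have hweights : {w | ∃ v ∈ dualCode doubledRepetitionCode,
      v - u ∈ doubledRepetitionCode ∧ euclideanWeight v = w} =
      {euclideanWeight u.1, euclideanWeight (u.1 + 2)} := by
    ext w
    simp only [← and_assoc, mem_dualCode_and_sub_mem_iff u.2]
    simp [or_and_right, exists_or, eq_comm]
  have hleast : IsLeast {euclideanWeight u.1, euclideanWeight (u.1 + 2)} (minWeight u) :=
    isLeast_pair
  have hr' : r = k / (4 : ℕ) := by simpa
  rw [hr', cosetMinNorm_wordCoset_iff, hweights]
  exact ⟨hleast.unique, fun h => h ▸ hleast⟩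

theorem addOrderOf_wordCoset (u : dualCode doubledRepetitionCode) :
    addOrderOf (wordCoset _ u) = wordOrder u := by
  have hzero (k : ℕ) : k • wordCoset doubledRepetitionCode u = 0 ↔
      k • (u : Fin 4 → ZMod 4) = 0 ∨ k • (u : Fin 4 → ZMod 4) = 2 := by
    rw [← map_nsmul, wordCoset_eq_zero_iff, mem_doubledRepetitionCode, Submodule.coe_smul_of_tower]
  have hone : wordCoset doubledRepetitionCode u = 0 ↔ (u : Fin 4 → ZMod 4) = 0 ∨ u.1 = 2 := by
    rw [wordCoset_eq_zero_iff, mem_doubledRepetitionCode]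
  have hfour : 4 • (u : Fin 4 → ZMod 4) = 0 := by
    rw [← Nat.cast_smul_eq_nsmul (ZMod 4)]
    exact zero_smul _ _
  unfold wordOrder
  split_ifs with hu1 hu2
  · exact AddMonoid.addOrderOf_eq_one_iff.2 (hone.2 hu1)
  · exact addOrderOf_eq_prime_iff.2 ⟨(hzero 2).2 hu2, mt hone.1 hu1⟩
  · exact addOrderOf_eq_prime_pow (p := 2) (n := 1) (mt (hzero 2).1 hu2)
      ((hzero 4).2 (.inl hfour))

theorem ncard_eq_of_card_words {s : Set (DualQuot (constructionA doubledRepetitionCode))}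
    {Q : (Fin 4 → ZMod 4) → Prop} [DecidablePred Q] {N : ℕ}
    (hsQ : ∀ u : dualCode doubledRepetitionCode, wordCoset _ u ∈ s ↔ Q u)
    (hQ : Finset.card {u : Fin 4 → ZMod 4 | 2 ⬝ᵥ u = 0 ∧ Q u} = 2 * N) : s.ncard = N := by
  have himage : Subtype.val '' (wordCoset doubledRepetitionCode ⁻¹' s) =
      ({u : Fin 4 → ZMod 4 | 2 ⬝ᵥ u = 0 ∧ Q u} : Finset (Fin 4 → ZMod 4)) := by
    ext u
    simp [hsQ, ← mem_dualCode_doubledRepetitionCode, and_comm]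
  have htwice : 2 * s.ncard = 2 * N := by
    rw [← hQ, ← card_doubledRepetitionCode,
      ← ncard_preimage_wordCoset doubledRepetitionCode_le_dualCode,
      ← Set.ncard_image_of_injective _ Subtype.val_injective, himage, Set.ncard_coe_finset]
  exact Nat.eq_of_mul_eq_mul_left two_pos htwice

theorem ncard_cosetMinNorm_addOrderOf {k o N : ℕ} {r : ℝ} (hr : r = k / 4)
    (hN : Finset.card {u : Fin 4 → ZMod 4 | 2 ⬝ᵥ u = 0 ∧ minWeight u = k ∧ wordOrder u = o} =
      2 * N) :
    {c | CosetMinNorm (constructionA doubledRepetitionCode) c r ∧ addOrderOf c = o}.ncard = N := by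
  refine ncard_eq_of_card_words (fun u => ?_) hN
  rw [Set.mem_ofPred_eq, cosetMinNorm_wordCoset_iff_minWeight hr, addOrderOf_wordCoset]

theorem minWeight_wordOrder_cases : ∀ u : Fin 4 → ZMod 4, 2 ⬝ᵥ u = 0 →
    (u = 0 ∨ u = 2) ∨
    (minWeight u = 2 ∧ wordOrder u = 4) ∨
    (minWeight u = 4 ∧ wordOrder u = 2) ∨
    (minWeight u = 6 ∧ wordOrder u = 4) ∨
    (minWeight u = 8 ∧ wordOrder u = 2) := by
  decide +kernel

/-- The quotient `Λ₄♯/Λ₄` has exactly 64 elements: the zero coset, 24 cosets of minimal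
norm 1/2 and order 4, 12 cosets of minimal norm 1 and order 2, 24 cosets of minimal
norm 3/2 and order 4, and 3 cosets of minimal norm 2 and order 2. -/
theorem Λ4_dual_quotient_classes :
    Nat.card (DualQuot Λ4) = 64 ∧
    (∀ c : DualQuot Λ4, c = 0 ∨
      (CosetMinNorm Λ4 c (1/2) ∧ addOrderOf c = 4) ∨
      (CosetMinNorm Λ4 c 1 ∧ addOrderOf c = 2) ∨
      (CosetMinNorm Λ4 c (3/2) ∧ addOrderOf c = 4) ∨
      (CosetMinNorm Λ4 c 2 ∧ addOrderOf c = 2)) ∧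
    {c : DualQuot Λ4 | CosetMinNorm Λ4 c (1/2) ∧ addOrderOf c = 4}.ncard = 24 ∧
    {c : DualQuot Λ4 | CosetMinNorm Λ4 c 1 ∧ addOrderOf c = 2}.ncard = 12 ∧
    {c : DualQuot Λ4 | CosetMinNorm Λ4 c (3/2) ∧ addOrderOf c = 4}.ncard = 24 ∧
    {c : DualQuot Λ4 | CosetMinNorm Λ4 c 2 ∧ addOrderOf c = 2}.ncard = 3 := by
  rw [Λ4_eq_constructionA]
  refine ⟨?_, wordCoset_surjective.forall.2 fun u => ?_, ?_, ?_, ?_, ?_⟩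
  · rw [← Set.ncard_univ]
    exact ncard_eq_of_card_words (Q := fun _ => True) (by simp) (by decide +kernel)
  · rw [wordCoset_eq_zero_iff, mem_doubledRepetitionCode, addOrderOf_wordCoset,
      cosetMinNorm_wordCoset_iff_minWeight (k := 2) (r := 1 / 2) (by norm_num),
      cosetMinNorm_wordCoset_iff_minWeight (k := 4) (r := 1) (by norm_num),
      cosetMinNorm_wordCoset_iff_minWeight (k := 6) (r := 3 / 2) (by norm_num),
      cosetMinNorm_wordCoset_iff_minWeight (k := 8) (r := 2) (by norm_num)]
    exact minWeight_wordOrder_cases u (mem_dualCode_doubledRepetitionCode.1 u.2)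
  · exact ncard_cosetMinNorm_addOrderOf (k := 2) (by norm_num) (by decide +kernel)
  · exact ncard_cosetMinNorm_addOrderOf (k := 4) (by norm_num) (by decide +kernel)
  · exact ncard_cosetMinNorm_addOrderOf (k := 6) (by norm_num) (by decide +kernel)
  · exact ncard_cosetMinNorm_addOrderOf (k := 8) (by norm_num) (by decide +kernel)
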